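/- The 8×8 complex matrix U₆ = (1/√2)·[ S₀⊗I₂⊗I₂ + S₁⊗(σ₁⊗I₂ − 2·S₁⊗S₃) + S₂⊗I₂⊗σ₁ + S₃⊗(2·S₁⊗S₁ − σ₁⊗σ₁) ] is unitary and has Schmidt rank exactly 6. -/

import Mathlib

/-!
Multiplying `U₆` by `√2` and expanding the `A`-factor in matrix units and the `B`-factor in
`I₂, S₁, S₂` exhibits six product terms, so the rank is at most six. Up to a change of basis this
tensor is the multiplication of a triangular by a full 2×2 matrix. Its flattenings have rank at
most four, so the lower bound needs more than a flattening.

Let `U₆ = ∑ j, A j ⊗ B j ⊗ C j` with at most five terms. Choose `β` so that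
`v j = (B j) 0 1 + β (B j) 1 0` vanishes only when both entries do. The blocks of `U₆` with
`B`-index `01` or `10` show that the matrices `v j • C j` still span all 2×2 matrices
(`span_weighted`), so they satisfy at most one linear relation up to scaling (`relations_parallel`).
The first column `((A j) 0 0, (A j) 1 0)` gives two such relations, because the corresponding
blocks of `U₆` vanish; so the two sequences `(A j) 0 0` and `(A j) 1 0` are proportional.
But at `B`-index `00` the two blocks `I₂` and `σ₁` obtained from them are linearly independent, a
contradiction.
-/

open Matrix Kronecker Complex

/-- The tripartite Schmidt rank of an 8×8 complex matrix, viewed as a matrix on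
ℂ² ⊗ ℂ² ⊗ ℂ² via Kronecker products: the least `r` such that
`U = ∑ j, A j ⊗ₖ (B j ⊗ₖ C j)` with 2×2 matrices `A j`, `B j`, `C j`. -/
noncomputable def sr (U : Matrix (Fin 2 × Fin 2 × Fin 2) (Fin 2 × Fin 2 × Fin 2) ℂ) : ℕ :=
  sInf {r | ∃ A B C : Fin r → Matrix (Fin 2) (Fin 2) ℂ,
    U = ∑ j, A j ⊗ₖ (B j ⊗ₖ C j)}

def S0 : Matrix (Fin 2) (Fin 2) ℂ := !![1, 0; 0, 0]
def S1 : Matrix (Fin 2) (Fin 2) ℂ := !![0, 1; 0, 0]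
def S2 : Matrix (Fin 2) (Fin 2) ℂ := !![0, 0; 1, 0]
def S3 : Matrix (Fin 2) (Fin 2) ℂ := !![0, 0; 0, 1]
def σ1 : Matrix (Fin 2) (Fin 2) ℂ := !![0, 1; 1, 0]
def σ2 : Matrix (Fin 2) (Fin 2) ℂ := !![0, -I; I, 0]
def σ3 : Matrix (Fin 2) (Fin 2) ℂ := !![1, 0; 0, -1]
def I2 : Matrix (Fin 2) (Fin 2) ℂ := 1

noncomputable def U₆ : Matrix (Fin 2 × Fin 2 × Fin 2) (Fin 2 × Fin 2 × Fin 2) ℂ :=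
  (Real.sqrt 2 : ℂ)⁻¹ • (S0 ⊗ₖ (I2 ⊗ₖ I2) + S1 ⊗ₖ (σ1 ⊗ₖ I2 - (2 : ℂ) • (S1 ⊗ₖ S3)) +
    S2 ⊗ₖ (I2 ⊗ₖ σ1) + S3 ⊗ₖ ((2 : ℂ) • (S1 ⊗ₖ S1) - σ1 ⊗ₖ σ1))

/-- Linear relations among at most five vectors spanning the four-dimensional space of 2×2 matrices
form a space of dimension at most one, so any two of them are proportional. -/
lemma relations_parallel {r : ℕ} (hr : r ≤ 5) (D : Fin r → Matrix (Fin 2) (Fin 2) ℂ)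
    (hD : Submodule.span ℂ (Set.range D) = ⊤) (f g : Fin r → ℂ)
    (hf : ∑ j, f j • D j = 0) (hg : ∑ j, g j • D j = 0) (j k : Fin r) :
    f j * g k = g j * f k := by
  let L := Fintype.linearCombination ℂ D
  have hrange : LinearMap.range L = ⊤ := by
    rw [Fintype.range_linearCombination, hD]
  have hdim := LinearMap.finrank_range_add_finrank_ker L
  rw [hrange, finrank_top, Module.finrank_matrix, Module.finrank_fin_fun] at hdim
  simp only [Fintype.card_fin, Module.finrank_self] at hdim
  obtain ⟨v, hv⟩ := finrank_le_one_iff.mp (show Module.finrank ℂ (LinearMap.ker L) ≤ 1 by omega)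
  obtain ⟨a, ha⟩ := hv ⟨f, by simpa [L, Fintype.linearCombination_apply] using hf⟩
  obtain ⟨b, hb⟩ := hv ⟨g, by simpa [L, Fintype.linearCombination_apply] using hg⟩
  have hfa : f = a • (v : Fin r → ℂ) := (congrArg Subtype.val ha).symm
  have hgb : g = b • (v : Fin r → ℂ) := (congrArg Subtype.val hb).symm
  simp only [hfa, hgb, Pi.smul_apply, smul_eq_mul]
  ring

/-- A generic linear combination `x j + β * y j` vanishes only where both `x` and `y` do. -/
lemma exists_generic {r : ℕ} (x y : Fin r → ℂ) :
    ∃ β : ℂ, ∀ j, x j + β * y j = 0 → x j = 0 ∧ y j = 0 := by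
  obtain ⟨β, hβ⟩ := Infinite.exists_notMem_finset (Finset.univ.image fun j => -x j / y j)
  refine ⟨β, fun j hj => ?_⟩
  by_cases hy : y j = 0
  · simpa [hy] using hj
  · refine absurd (Finset.mem_image.mpr ⟨j, Finset.mem_univ j, ?_⟩) hβ
    rw [div_eq_iff hy]
    linear_combination -hj

lemma inv_sqrt_two_ne_zero : (Real.sqrt 2 : ℂ)⁻¹ ≠ 0 := by
  simp

lemma slice_eq {r : ℕ} {A B C : Fin r → Matrix (Fin 2) (Fin 2) ℂ}
    (h : U₆ = ∑ j, A j ⊗ₖ (B j ⊗ₖ C j)) (i i' k k' : Fin 2) :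
    ∑ j, (A j i i' * B j k k') • C j = Matrix.of fun m m' => U₆ (i, k, m) (i', k', m') := by
  ext m m'
  simp [h, Matrix.sum_apply, Matrix.smul_apply, Matrix.kroneckerMap_apply, mul_assoc]

lemma span_eq_top_of_mem {s : ℂ} (hs : s ≠ 0) (W : Submodule ℂ (Matrix (Fin 2) (Fin 2) ℂ))
    (h1 : s • !![1, 0; 0, -1] ∈ W) (h2 : s • !![1, 0; 0, 1] ∈ W)
    (h3 : s • !![0, 1; -1, 0] ∈ W) (h4 : s • !![0, -1; -1, 0] ∈ W) : W = ⊤ := by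
  rw [Submodule.smul_mem_iff _ hs] at h1 h2 h3 h4
  refine eq_top_iff.mpr fun M _ => ?_
  have : M = ((M 0 0 - M 1 1) / 2) • !![1, 0; 0, -1] + ((M 0 0 + M 1 1) / 2) • !![1, 0; 0, 1]
      + ((M 0 1 - M 1 0) / 2) • !![0, 1; -1, 0] + (-(M 0 1 + M 1 0) / 2) • !![0, -1; -1, 0] := by
    ext i j
    fin_cases i <;> fin_cases j <;> simp <;> ring
  rw [this]
  exact W.add_mem (W.add_mem (W.add_mem (W.smul_mem _ h1) (W.smul_mem _ h2)) (W.smul_mem _ h3))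
    (W.smul_mem _ h4)

lemma span_weighted {r : ℕ} {A B C : Fin r → Matrix (Fin 2) (Fin 2) ℂ}
    (h : U₆ = ∑ j, A j ⊗ₖ (B j ⊗ₖ C j)) (v : Fin r → ℂ)
    (hv : ∀ j, v j = 0 → B j 0 1 = 0 ∧ B j 1 0 = 0) :
    Submodule.span ℂ (Set.range fun j => v j • C j) = ⊤ := by
  set W := Submodule.span ℂ (Set.range fun j => v j • C j)
  have hmem : ∀ (b : Fin r → ℂ), (∀ j, v j = 0 → b j = 0) → ∀ a : Fin r → ℂ,
      ∑ j, (a j * b j) • C j ∈ W := by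
    intro b hb a
    refine W.sum_mem fun j _ => ?_
    by_cases h0 : v j = 0
    · simp [hb j h0]
    · have : (a j * b j) • C j = (a j * b j / v j) • (v j • C j) := by
        rw [smul_smul, div_mul_cancel₀ _ h0]
      rw [this]
      exact W.smul_mem _ (Submodule.subset_span ⟨j, rfl⟩)
  have h01 := hmem (fun j => B j 0 1) fun j hj => (hv j hj).1
  have h10 := hmem (fun j => B j 1 0) fun j hj => (hv j hj).2
  refine span_eq_top_of_mem inv_sqrt_two_ne_zero W ?_ ?_ ?_ ?_
  · convert h01 fun j => A j 0 1
    rw [slice_eq h]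
    ext m m'
    fin_cases m <;> fin_cases m' <;> simp [U₆, S0, S1, S2, S3, σ1, I2] <;> norm_num
  · convert h10 fun j => A j 0 1
    rw [slice_eq h]
    ext m m'
    fin_cases m <;> fin_cases m' <;> simp [U₆, S0, S1, S2, S3, σ1, I2]
  · convert h01 fun j => A j 1 1
    rw [slice_eq h]
    ext m m'
    fin_cases m <;> fin_cases m' <;> simp [U₆, S0, S1, S2, S3, σ1, I2] <;> norm_num
  · convert h10 fun j => A j 1 1
    rw [slice_eq h]
    ext m m'
    fin_cases m <;> fin_cases m' <;> simp [U₆, S0, S1, S2, S3, σ1, I2]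

lemma six_le {r : ℕ} {A B C : Fin r → Matrix (Fin 2) (Fin 2) ℂ}
    (h : U₆ = ∑ j, A j ⊗ₖ (B j ⊗ₖ C j)) : 6 ≤ r := by
  by_contra! hr
  obtain ⟨β, hβ⟩ := exists_generic (fun j => B j 0 1) fun j => B j 1 0
  have hspan := span_weighted h _ hβ
  have hrel : ∀ i : Fin 2, ∑ j, A j i 0 • ((B j 0 1 + β * B j 1 0) • C j) = 0 := by
    intro i
    have e : ∑ j, A j i 0 • ((B j 0 1 + β * B j 1 0) • C j)
        = ∑ j, (A j i 0 * B j 0 1) • C j + β • ∑ j, (A j i 0 * B j 1 0) • C j := by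
      rw [Finset.smul_sum, ← Finset.sum_add_distrib]
      refine Finset.sum_congr rfl fun j _ => ?_
      module
    rw [e, slice_eq h, slice_eq h]
    ext m m'
    fin_cases i <;> fin_cases m <;> fin_cases m' <;> simp [U₆, S0, S1, S2, S3, σ1, I2]
  have hpar := relations_parallel (by omega) _ hspan _ _ (hrel 0) (hrel 1)
  have entry : ∀ i m' : Fin 2, ∑ j, A j i 0 * (B j 0 0 * C j 0 m') = U₆ (i, 0, 0) (0, 0, m') := by
    intro i m'
    simp [h, Matrix.sum_apply, Matrix.kroneckerMap_apply]
  -- Proportionality of the two sequences kills this 2×2 determinant of entries of `U₆`.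
  have hdet : U₆ (0, 0, 0) (0, 0, 0) * U₆ (1, 0, 0) (0, 0, 1)
      = U₆ (1, 0, 0) (0, 0, 0) * U₆ (0, 0, 0) (0, 0, 1) := by
    simp only [← entry, Finset.sum_mul_sum]
    refine Finset.sum_congr rfl fun j _ => Finset.sum_congr rfl fun k _ => ?_
    linear_combination (B j 0 0 * C j 0 0 * (B k 0 0 * C k 0 1)) * hpar j k
  simp [U₆, S0, S1, S2, S3, σ1, I2] at hdet

lemma six_terms : ∃ A B C : Fin 6 → Matrix (Fin 2) (Fin 2) ℂ,
    U₆ = ∑ j, A j ⊗ₖ (B j ⊗ₖ C j) := by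
  let s : ℂ := (Real.sqrt 2 : ℂ)⁻¹
  refine ⟨![s • S0, s • S2, s • S1, s • S1, s • S3, -s • S3], ![I2, I2, S1, S2, S1, S2],
    ![I2, σ1, S0 - S3, I2, S1 - S2, σ1], ?_⟩
  have hI : I2 = S0 + S3 := by
    ext i j
    fin_cases i <;> fin_cases j <;> simp [I2, S0, S3]
  have hσ : σ1 = S1 + S2 := by
    ext i j
    fin_cases i <;> fin_cases j <;> simp [σ1, S1, S2]
  simp only [U₆, hI, hσ, Fin.sum_univ_six]
  ext ⟨i, k, m⟩ ⟨i', k', m'⟩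
  simp [Matrix.kroneckerMap_apply, s]
  ring

set_option maxHeartbeats 4000000 in
lemma U₆_unitary : U₆ ∈ Matrix.unitaryGroup (Fin 2 × Fin 2 × Fin 2) ℂ := by
  have hs : (Real.sqrt 2 : ℂ)⁻¹ * (Real.sqrt 2 : ℂ)⁻¹ = 1 / 2 := by
    rw [← mul_inv, ← Complex.ofReal_mul, Real.mul_self_sqrt (by norm_num)]
    norm_num
  rw [Matrix.mem_unitaryGroup_iff]
  ext ⟨i, k, m⟩ ⟨i', k', m'⟩
  rw [Matrix.mul_apply]
  simp only [Fintype.sum_prod_type, Fin.sum_univ_two, Matrix.star_apply]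
  fin_cases i <;> fin_cases k <;> fin_cases m <;> fin_cases i' <;> fin_cases k' <;>
    fin_cases m' <;> simp [U₆, S0, S1, S2, S3, σ1, I2] <;>
    first
    | done
    | linear_combination 2 * hs
    | ring

theorem stmt18 : U₆ ∈ Matrix.unitaryGroup (Fin 2 × Fin 2 × Fin 2) ℂ ∧ sr U₆ = 6 := by
  refine ⟨U₆_unitary, le_antisymm (Nat.sInf_le six_terms) (le_csInf ⟨6, six_terms⟩ ?_)⟩
  rintro r ⟨A, B, C, h⟩
  exact six_le h
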